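/- The derivative of the fundamental endomorphism is a reflection across the horizontal space: Let A be a fanning frame in V with fundamental endomorphism F(t). Then t ↦ F(t) is smooth, and its derivative satisfies Ḟ(t)∘Ḟ(t) = id_V and Ḟ(t)a_i(t) = −a_i(t) for all i and t; moreover V = ℓ(t) ⊕ h(t), where ℓ(t) is the span of a_1(t), …, a_n(t) (contained in the (−1)-eigenspace of Ḟ(t)) and h(t) = ker(Ḟ(t) − id_V) is the (+1)-eigenspace (the horizontal space), each of dimension n. -/

import Mathlib

/-!
Write `F`, `F'`, `ℓ` for `F(t)`, `Ḟ(t)`, `ℓ(t)`. Differentiating `F a_i = 0` and using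
`F ȧ_i = a_i` shows that `F'` is `-1` on `ℓ`. Since `ℓ` is both the range and the kernel of `F`,
this says `F' F = -F`, while differentiating `F² = 0` gives `F' F + F F' = 0`. Hence `F F' = F`,
so `F'` is the identity modulo `ker F = ℓ`. An endomorphism that is `-1` on `ℓ` and the identity
modulo `ℓ` is a reflection, and `F` maps its fixed space isomorphically onto `ℓ`.
-/

open Module Set Submodule Topology

section Reflection

variable {R V : Type*} [AddCommGroup V]

theorem involutive_of_eq_neg_of_sub_mem [Ring R] [Module R V] {G : V →ₗ[R] V}
    {p : Submodule R V} (hneg : ∀ v ∈ p, G v = -v) (hsub : ∀ v, v - G v ∈ p) :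
    Function.Involutive G := fun v => by
  have h : G v - G (G v) = G v - v := by rw [← map_sub, hneg _ (hsub v), neg_sub]
  exact sub_right_injective h

theorem isCompl_ker_sub_id_of_eq_neg_of_sub_mem [CommRing R] [Invertible (2 : R)] [Module R V]
    {G : V →ₗ[R] V} {p : Submodule R V} (hneg : ∀ v ∈ p, G v = -v) (hsub : ∀ v, v - G v ∈ p) :
    IsCompl p (LinearMap.ker (G - LinearMap.id)) := by
  let proj : V →ₗ[R] p := ⅟(2 : R) • (LinearMap.id - G).codRestrict p hsub
  have proj_apply (v : V) : (proj v : V) = ⅟(2 : R) • (v - G v) := rfl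
  have hproj (v : p) : proj v = v := by
    ext
    rw [proj_apply, hneg v v.2, sub_neg_eq_add, smul_add, invOf_two_smul_add_invOf_two_smul]
  have hker : LinearMap.ker proj = LinearMap.ker (G - LinearMap.id) := by
    ext v
    rw [LinearMap.mem_ker, LinearMap.mem_ker, ← Subtype.coe_inj, proj_apply, ZeroMemClass.coe_zero,
      (isUnit_of_invertible (⅟(2 : R))).smul_eq_zero, LinearMap.sub_apply, LinearMap.id_apply,
      sub_eq_zero, sub_eq_zero, eq_comm]
  exact hker ▸ LinearMap.isCompl_of_proj hproj

end Reflection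

/-- `F` annihilates the family `a` and carries `b` to `a`. For a fanning frame `a` with derivative
`b = ȧ` at a given time, this characterizes the fundamental endomorphism at that time; that `a`
and `b` span the module is kept as a separate hypothesis. -/
structure IsFundamentalEndomorphism {R V ι : Type*} [Semiring R] [AddCommMonoid V] [Module R V]
    (F : V →ₗ[R] V) (a b : ι → V) : Prop where
  map_left : ∀ i, F (a i) = 0
  map_right : ∀ i, F (b i) = a i

namespace IsFundamentalEndomorphism

section Semiring

variable {R V ι : Type*} [Semiring R] [AddCommMonoid V] [Module R V] {F : V →ₗ[R] V} {a b : ι → V}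

theorem span_le_ker (hF : IsFundamentalEndomorphism F a b) :
    span R (range a) ≤ LinearMap.ker F :=
  span_le.2 (range_subset_iff.2 hF.map_left)

theorem range_eq_span (hF : IsFundamentalEndomorphism F a b)
    (hspan : span R (range (Sum.elim a b)) = ⊤) : LinearMap.range F = span R (range a) := by
  have hFa : map F (span R (range a)) = ⊥ := LinearMap.le_ker_iff_map.1 hF.span_le_ker
  have hFb : F ∘ b = a := funext hF.map_right
  rw [LinearMap.range_eq_map, ← hspan, Sum.elim_range, span_union, Submodule.map_sup, hFa,
    bot_sup_eq, map_span, ← range_comp, hFb]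

theorem apply_apply_eq_zero (hF : IsFundamentalEndomorphism F a b)
    (hspan : span R (range (Sum.elim a b)) = ⊤) (v : V) : F (F v) = 0 :=
  hF.span_le_ker (hF.range_eq_span hspan ▸ LinearMap.mem_range_self F v)

end Semiring

section Ring

variable {R V ι : Type*} [Ring R] [AddCommGroup V] [Module R V] {F : V →ₗ[R] V} {a b : ι → V}

theorem ker_eq_span (hF : IsFundamentalEndomorphism F a b) (hli : LinearIndependent R a)
    (hspan : span R (range (Sum.elim a b)) = ⊤) : LinearMap.ker F = span R (range a) := by
  have hdisj : Disjoint (LinearMap.ker F) (span R (range b)) :=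
    (range_ker_disjoint ((funext hF.map_right : F ∘ b = a) ▸ hli)).symm
  have hsup : span R (range a) ⊔ span R (range b) = ⊤ := by
    rw [← span_union, ← Sum.elim_range, hspan]
  exact (eq_of_le_of_inf_le_of_sup_le hF.span_le_ker (hdisj.le_bot.trans bot_le)
    (le_top.trans hsup.ge)).symm

theorem nonempty_basis_of_isCompl (hF : IsFundamentalEndomorphism F a b)
    (hli : LinearIndependent R a) (hspan : span R (range (Sum.elim a b)) = ⊤) {q : Submodule R V}
    (hq : IsCompl (span R (range a)) q) : Nonempty (Basis ι R q) := by
  rw [← hF.ker_eq_span hli hspan] at hq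
  let e : q ≃ₗ[R] span R (range a) := (F.kerComplementEquivRange hq.symm).trans
    (LinearEquiv.ofEq _ _ (hF.range_eq_span hspan))
  exact ⟨(Basis.span hli).map e.symm⟩

end Ring

section Derivative

variable {𝕜 V ι : Type*} [NontriviallyNormedField 𝕜] [NormedAddCommGroup V] [NormedSpace 𝕜 V]
  {a a' : 𝕜 → ι → V} {F : 𝕜 → V →L[𝕜] V} {F' : V →L[𝕜] V} {t : 𝕜}

theorem deriv_apply_eq_neg
    (hF : ∀ᶠ s in 𝓝 t, IsFundamentalEndomorphism (F s).toLinearMap (a s) (a' s))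
    (ha : ∀ i, HasDerivAt (fun s => a s i) (a' t i) t) (hF' : HasDerivAt F F' t) {v : V}
    (hv : v ∈ span 𝕜 (range (a t))) : F' v = -v := by
  have hframe : EqOn F'.toLinearMap (-LinearMap.id : V →ₗ[𝕜] V) (range (a t)) := by
    rintro _ ⟨i, rfl⟩
    have hsum : F' (a t i) + F t (a' t i) = 0 :=
      (hF'.clm_apply (ha i)).unique
        ((hasDerivAt_const t 0).congr_of_eventuallyEq (hF.mono fun s hs => hs.map_left i))
    have hFa' : F t (a' t i) = a t i := hF.self_of_nhds.map_right i
    exact eq_neg_of_add_eq_zero_left (hFa' ▸ hsum)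
  exact LinearMap.eqOn_span hframe hv

theorem deriv_apply_apply_add_apply_deriv_apply
    (hF : ∀ᶠ s in 𝓝 t, IsFundamentalEndomorphism (F s).toLinearMap (a s) (a' s))
    (hspan : ∀ᶠ s in 𝓝 t, span 𝕜 (range (Sum.elim (a s) (a' s))) = ⊤)
    (hF' : HasDerivAt F F' t) (v : V) : F' (F t v) + F t (F' v) = 0 := by
  have hsq : (fun s => (F s).comp (F s)) =ᶠ[𝓝 t] fun _ => 0 := by
    filter_upwards [hF, hspan] with s hF_s hspan_s
    exact ContinuousLinearMap.ext (hF_s.apply_apply_eq_zero hspan_s)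
  have hderiv : F'.comp (F t) + (F t).comp F' = 0 :=
    (hF'.clm_comp hF').unique ((hasDerivAt_const t 0).congr_of_eventuallyEq hsq)
  exact DFunLike.congr_fun hderiv v

theorem sub_deriv_apply_mem_span
    (hF : ∀ᶠ s in 𝓝 t, IsFundamentalEndomorphism (F s).toLinearMap (a s) (a' s))
    (hspan : ∀ᶠ s in 𝓝 t, span 𝕜 (range (Sum.elim (a s) (a' s))) = ⊤)
    (hli : LinearIndependent 𝕜 (a t)) (ha : ∀ i, HasDerivAt (fun s => a s i) (a' t i) t)
    (hF' : HasDerivAt F F' t) (v : V) : v - F' v ∈ span 𝕜 (range (a t)) := by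
  have hF_t := hF.self_of_nhds
  have hspan_t := hspan.self_of_nhds
  have hFv : F t v ∈ span 𝕜 (range (a t)) :=
    hF_t.range_eq_span hspan_t ▸ LinearMap.mem_range_self (F t).toLinearMap v
  have hsum := deriv_apply_apply_add_apply_deriv_apply hF hspan hF' v
  rw [deriv_apply_eq_neg hF ha hF' hFv, neg_add_eq_zero] at hsum
  rw [← hF_t.ker_eq_span hli hspan_t]
  exact LinearMap.sub_mem_ker_iff.2 hsum

end Derivative

end IsFundamentalEndomorphism

theorem deriv_fundamental_endomorphism_is_reflection_general
    {𝕜 V ι : Type*} [NontriviallyNormedField 𝕜] [Invertible (2 : 𝕜)]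
    [NormedAddCommGroup V] [NormedSpace 𝕜 V] {U : Set 𝕜} (hU : IsOpen U)
    {a a' : 𝕜 → ι → V} (ha : ∀ t ∈ U, ∀ i, HasDerivAt (fun s => a s i) (a' t i) t)
    (hli : ∀ t ∈ U, LinearIndependent 𝕜 (a t))
    (hspan : ∀ t ∈ U, span 𝕜 (range (Sum.elim (a t) (a' t))) = ⊤)
    {F F' : 𝕜 → V →L[𝕜] V}
    (hF : ∀ t ∈ U, IsFundamentalEndomorphism (F t).toLinearMap (a t) (a' t))
    (hF' : ∀ t ∈ U, HasDerivAt F (F' t) t) {t : 𝕜} (ht : t ∈ U) :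
    Function.Involutive (F' t) ∧
      (∀ i, F' t (a t i) = -a t i) ∧
      IsCompl (span 𝕜 (range (a t)))
        (LinearMap.ker (F' t - ContinuousLinearMap.id 𝕜 V).toLinearMap) ∧
      Nonempty (Basis ι 𝕜 (span 𝕜 (range (a t)))) ∧
      Nonempty (Basis ι 𝕜 (LinearMap.ker (F' t - ContinuousLinearMap.id 𝕜 V).toLinearMap)) := by
  have hF_near := Filter.eventually_of_mem (hU.mem_nhds ht) hF
  have hspan_near := Filter.eventually_of_mem (hU.mem_nhds ht) hspan
  have hneg : ∀ v ∈ span 𝕜 (range (a t)), (F' t).toLinearMap v = -v := fun _ =>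
    IsFundamentalEndomorphism.deriv_apply_eq_neg hF_near (ha t ht) (hF' t ht)
  have hsub : ∀ v, v - (F' t).toLinearMap v ∈ span 𝕜 (range (a t)) :=
    IsFundamentalEndomorphism.sub_deriv_apply_mem_span hF_near hspan_near (hli t ht) (ha t ht)
      (hF' t ht)
  have hcompl := isCompl_ker_sub_id_of_eq_neg_of_sub_mem hneg hsub
  exact ⟨involutive_of_eq_neg_of_sub_mem hneg hsub, fun i => hneg _ (subset_span ⟨i, rfl⟩), hcompl,
    ⟨Basis.span (hli t ht)⟩, (hF t ht).nonempty_basis_of_isCompl (hli t ht) (hspan t ht) hcompl⟩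

/-- **Ḟ(t) is a reflection across the horizontal space.**  For a fanning frame `A` with
fundamental endomorphism `F(t)` and derivative `Ḟ(t)`: `Ḟ(t)² = id`, `Ḟ(t) a_i(t) = −a_i(t)`,
and `V = ℓ(t) ⊕ h(t)`, where `ℓ(t) = span(a_i(t))` lies in the `(−1)`-eigenspace and
`h(t) = ker(Ḟ(t) − id)` is the `(+1)`-eigenspace, each of dimension `n`. -/
theorem deriv_fundamental_endomorphism_is_reflection
    {V : Type*} [NormedAddCommGroup V] [NormedSpace ℝ V] [FiniteDimensional ℝ V]
    {n : ℕ} (hn : 0 < n) (hdim : Module.finrank ℝ V = 2 * n)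
    (A A' : ℝ → Fin n → V)
    (hA : ∀ i, ContDiff ℝ (⊤ : ℕ∞) (fun t => A t i))
    (hA' : ∀ i t, HasDerivAt (fun s => A s i) (A' t i) t)
    (hfan : ∀ t, LinearIndependent ℝ (Sum.elim (A t) (A' t)) ∧
      Submodule.span ℝ (Set.range (Sum.elim (A t) (A' t))) = ⊤)
    (F F' : ℝ → V →L[ℝ] V)
    (hF0 : ∀ t i, F t (A t i) = 0)
    (hF1 : ∀ t i, F t (A' t i) = A t i)
    (hFd : ∀ t, HasDerivAt F (F' t) t) :
    ∀ t, (∀ v : V, F' t (F' t v) = v) ∧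
      (∀ i, F' t (A t i) = -(A t i)) ∧
      IsCompl (Submodule.span ℝ (Set.range (A t)))
        (LinearMap.ker (F' t - ContinuousLinearMap.id ℝ V).toLinearMap) ∧
      Module.finrank ℝ (Submodule.span ℝ (Set.range (A t))) = n ∧
      Module.finrank ℝ (LinearMap.ker (F' t - ContinuousLinearMap.id ℝ V).toLinearMap) = n := by
  intro t
  obtain ⟨hinv, hneg, hcompl, ⟨basisSpan⟩, ⟨basisFixed⟩⟩ :=
    deriv_fundamental_endomorphism_is_reflection_general isOpen_univ (fun t _ i => hA' i t)
      (fun t _ => (hfan t).1.comp Sum.inl Sum.inl_injective) (fun t _ => (hfan t).2)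
      (fun t _ => ⟨hF0 t, hF1 t⟩) (fun t _ => hFd t) (mem_univ t)
  exact ⟨hinv, hneg, hcompl, by simpa using finrank_eq_card_basis basisSpan,
    by simpa using finrank_eq_card_basis basisFixed⟩
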